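/- Let p ≥ 3 be an odd integer. In the ring R = ℤ[X]/((X^p − 1)·ℤ[X]), let σ denote the image of X, set λ = 1 − σ, let ε : R → ℤ be the ring homomorphism induced by X ↦ 1, and let I = ker ε. Then I equals the ℤ-submodule of R spanned by {λ, λ², …, λ^{p−1}}; in fact I = ⊕_{k=1}^{p−1} ℤ·λ^k as an internal direct sum of abelian groups. -/

import Mathlib

/-!
The substitution `X ↦ 1 - X` is a degree-preserving involution of `ℤ[X]`, so division by the
monic polynomial `X ^ p - 1` shows that every element of `R` is `h(λ)` for a unique integer
polynomial `h` of degree less than `p`; in other words `1, λ, …, λ^(p-1)` is a `ℤ`-basis of `R`.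
Existence is `exists_aeval_lam_eq` and uniqueness is `eq_zero_of_aeval_lam_eq_zero`. As
`ε(λ) = 0`, the augmentation sends `h(λ)` to the constant coefficient of `h`, so its kernel is
spanned by the positive powers of `λ`, which are linearly independent.
-/

open Polynomial

/-- Evaluation at `λ = 1 - σ` is substitution of `1 - X` followed by reduction. -/
lemma aeval_lam_eq_mk_comp (J : Ideal ℤ[X]) (h : ℤ[X]) :
    aeval (1 - Ideal.Quotient.mk J X) h = Ideal.Quotient.mk J (h.comp (1 - X)) := by
  have hX : (1 - Ideal.Quotient.mk J X) = (Ideal.Quotient.mkₐ ℤ J) (1 - X) := by simp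
  rw [hX, aeval_algHom_apply, ← Polynomial.comp_eq_aeval]
  rfl

lemma comp_one_sub_X_comp_one_sub_X (h : ℤ[X]) : (h.comp (1 - X)).comp (1 - X) = h := by
  simp [comp_assoc]

lemma natDegree_comp_one_sub_X (h : ℤ[X]) : (h.comp (1 - X)).natDegree = h.natDegree := by
  have h1 : (1 - X : ℤ[X]).natDegree = 1 := by
    rw [← natDegree_neg, neg_sub, ← C_1, natDegree_X_sub_C]
  rw [natDegree_comp, h1, mul_one]

lemma exists_aeval_lam_eq (p : ℕ) (hp : p ≠ 0) (x : ℤ[X] ⧸ Ideal.span {(X : ℤ[X]) ^ p - 1}) :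
    ∃ h : ℤ[X], h.natDegree < p ∧
      aeval (1 - Ideal.Quotient.mk (Ideal.span {(X : ℤ[X]) ^ p - 1}) X) h = x := by
  obtain ⟨f, rfl⟩ := Ideal.Quotient.mk_surjective x
  have hm : (X ^ p - 1 : ℤ[X]).Monic := by simpa using monic_X_pow_sub_C (1 : ℤ) hp
  have hd : (X ^ p - 1 : ℤ[X]).natDegree = p := by
    simpa using natDegree_X_pow_sub_C (n := p) (r := (1 : ℤ))
  refine ⟨(f %ₘ (X ^ p - 1)).comp (1 - X), ?_, ?_⟩
  · rw [natDegree_comp_one_sub_X]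
    have := natDegree_modByMonic_lt f hm (by intro h; rw [h] at hd; simp at hd; omega)
    omega
  · rw [aeval_lam_eq_mk_comp, comp_one_sub_X_comp_one_sub_X, Ideal.Quotient.eq,
      Ideal.mem_span_singleton]
    exact ⟨-(f /ₘ (X ^ p - 1)), by linear_combination modByMonic_add_div f (X ^ p - 1 : ℤ[X])⟩

lemma eq_zero_of_aeval_lam_eq_zero (p : ℕ) (hp : p ≠ 0) (h : ℤ[X]) (hdeg : h.natDegree < p)
    (h0 : aeval (1 - Ideal.Quotient.mk (Ideal.span {(X : ℤ[X]) ^ p - 1}) X) h = 0) : h = 0 := by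
  have hm : (X ^ p - 1 : ℤ[X]).Monic := by simpa using monic_X_pow_sub_C (1 : ℤ) hp
  have hd : (X ^ p - 1 : ℤ[X]).natDegree = p := by
    simpa using natDegree_X_pow_sub_C (n := p) (r := (1 : ℤ))
  rw [aeval_lam_eq_mk_comp, Ideal.Quotient.eq_zero_iff_mem, Ideal.mem_span_singleton] at h0
  have hc : h.comp (1 - X) = 0 := by
    by_contra hne
    have := hm.not_dvd_of_natDegree_lt hne (by rw [natDegree_comp_one_sub_X, hd]; exact hdeg)
    exact this h0
  rw [← comp_one_sub_X_comp_one_sub_X h, hc, zero_comp]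

/-- In `R = ℤ[X]/(X^p − 1)` with `σ` the image of `X`, `λ = 1 − σ`, and `I` the kernel of
the augmentation map `ε` (induced by `X ↦ 1`), the ideal `I`, as a `ℤ`-submodule of `R`,
is the internal direct sum `⊕_{k=1}^{p−1} ℤ·λ^k`. -/
theorem stmt_8 (p : ℕ) (hp : 3 ≤ p) (hodd : Odd p)
    (ε : (ℤ[X] ⧸ Ideal.span {(X : ℤ[X]) ^ p - 1}) →+* ℤ)
    (hε : ε (Ideal.Quotient.mk (Ideal.span {(X : ℤ[X]) ^ p - 1}) X) = 1) :
    (Submodule.restrictScalars ℤ (RingHom.ker ε) =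
      ⨆ k : Fin (p - 1),
        Submodule.span ℤ
          {(1 - Ideal.Quotient.mk (Ideal.span {(X : ℤ[X]) ^ p - 1}) X) ^ ((k : ℕ) + 1)}) ∧
    iSupIndep (fun k : Fin (p - 1) =>
      Submodule.span ℤ
        {(1 - Ideal.Quotient.mk (Ideal.span {(X : ℤ[X]) ^ p - 1}) X) ^ ((k : ℕ) + 1)}) := by
  have hp0 : p ≠ 0 := by omega
  set lam := 1 - Ideal.Quotient.mk (Ideal.span {(X : ℤ[X]) ^ p - 1}) X with hlam
  have hεlam : ε lam = 0 := by rw [hlam, map_sub, hε, map_one, sub_self]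
  refine ⟨le_antisymm ?_ ?_, ?_⟩
  · intro x hx
    obtain ⟨h, hdeg, rfl⟩ := exists_aeval_lam_eq p hp0 x
    rw [← hlam] at hx ⊢
    rw [Submodule.restrictScalars_mem, RingHom.mem_ker] at hx
    have hdeg' : h.natDegree < (p - 1) + 1 := by omega
    rw [aeval_eq_sum_range' hdeg', Finset.sum_range_succ'] at hx ⊢
    have hc : h.coeff 0 = 0 := by
      simpa [hεlam] using hx
    rw [hc, zero_smul, add_zero]
    refine Submodule.sum_mem _ fun k hk => ?_
    exact Submodule.smul_mem _ _ (Submodule.mem_iSup_of_mem ⟨k, Finset.mem_range.1 hk⟩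
      (Submodule.mem_span_singleton_self _))
  · refine iSup_le fun k => ?_
    rw [Submodule.span_singleton_le_iff_mem, Submodule.restrictScalars_mem, RingHom.mem_ker,
      map_pow, hεlam, zero_pow (Nat.succ_ne_zero _)]
  · refine LinearIndependent.iSupIndep_span_singleton (Fintype.linearIndependent_iff.2 ?_)
    intro g hg i
    have hz : (∑ k : Fin (p - 1), monomial ((k : ℕ) + 1) (g k) : ℤ[X]) = 0 := by
      refine eq_zero_of_aeval_lam_eq_zero p hp0 _ ?_ ?_
      · refine lt_of_le_of_lt (natDegree_sum_le_of_forall_le (n := p - 1) _ _ fun k _ => ?_)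
          (by omega)
        exact (natDegree_monomial_le _).trans k.2
      · rw [← hlam, map_sum, ← hg]
        refine Finset.sum_congr rfl fun k _ => ?_
        exact (aeval_monomial _).trans (Algebra.smul_def _ _).symm
    have := congrArg (fun q : ℤ[X] => q.coeff ((i : ℕ) + 1)) hz
    simpa [finsetSum_coeff, coeff_monomial, Fin.val_inj] using this
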